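/- Let t₀ : α × Option Bool and L : List (α × Option Bool) be such that every element (s, m) of the list t₀ :: L satisfies m = some false → ¬P s. Let c := L.foldl contract t₀. Then: (1) c.2 = some false → ¬P c.1; and (2) if (c.2 ≠ some true → P c.1), then every element (s, m) of the list t₀ :: L satisfies m ≠ some true → P s. -/

import Mathlib

/-!
The fold is handled by induction on the list, generalizing the accumulator. Everything rests on
two facts about a single contraction: it keeps `ff`-marked terms genuine counterexamples
(`contract_valid`), and its result can fail to be a counterexample only if both arguments do
(`contract_sound`). Since `contract P t₀ t` is again valid, the induction hypothesis applies to it.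
-/

/-- The marked contraction operator of the Dialectica interpretation with
counterexample marking. Markers: `some true` ~ tt, `some false` ~ ff, `none` ~ ⊥. -/
def contract {α : Type*} (P : α → Prop) [DecidablePred P] :
    α × Option Bool → α × Option Bool → α × Option Bool :=
  fun t₁ t₂ =>
    if t₂.2 = some true ∨ t₁.2 = some false then t₁
    else if t₁.2 = some true ∨ t₂.2 = some false ∨ P t₁.1 then t₂
    else (t₁.1, some false)

/-- One contraction step preserves validity of `ff`-marked counterexamples. -/
theorem contract_valid {α : Type*} (P : α → Prop) [DecidablePred P]
    (t₁ t₂ : α × Option Bool) (h₁ : t₁.2 = some false → ¬ P t₁.1)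
    (h₂ : t₂.2 = some false → ¬ P t₂.1) :
    (contract P t₁ t₂).2 = some false → ¬ P (contract P t₁ t₂).1 := by
  unfold contract
  split_ifs with ha hb
  · exact h₁
  · exact h₂
  · intro _
    tauto

/-- If the contraction of two valid terms is no counterexample, neither argument is one:
a valid `ff`-marked result always refutes `P`, so the only remaining branches are those in
which the discarded term is marked `tt` or satisfies `P`. -/
theorem contract_sound {α : Type*} (P : α → Prop) [DecidablePred P]
    (t₁ t₂ : α × Option Bool) (h₁ : t₁.2 = some false → ¬ P t₁.1)
    (h₂ : t₂.2 = some false → ¬ P t₂.1)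
    (hc : (contract P t₁ t₂).2 ≠ some true → P (contract P t₁ t₂).1) :
    (t₁.2 ≠ some true → P t₁.1) ∧ (t₂.2 ≠ some true → P t₂.1) := by
  unfold contract at hc
  split_ifs at hc <;> grind

theorem marked_contract_foldl {α : Type*} (P : α → Prop) [DecidablePred P]
    (t₀ : α × Option Bool) (L : List (α × Option Bool))
    (h : ∀ p ∈ t₀ :: L, p.2 = some false → ¬ P p.1) :
    ((L.foldl (contract P) t₀).2 = some false → ¬ P (L.foldl (contract P) t₀).1) ∧
    (((L.foldl (contract P) t₀).2 ≠ some true → P (L.foldl (contract P) t₀).1) →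
        ∀ p ∈ t₀ :: L, p.2 ≠ some true → P p.1) := by
  induction L generalizing t₀ with
  | nil => simpa using h
  | cons t L ih =>
    have h₀ := h t₀ (by simp)
    have ht := h t (by simp)
    obtain ⟨hv, hs⟩ := ih (contract P t₀ t) (by
      intro p hp
      rcases List.mem_cons.1 hp with rfl | hp
      · exact contract_valid P t₀ t h₀ ht
      · exact h p (by simp [hp]))
    refine ⟨hv, fun hc p hp => ?_⟩
    have hall := hs hc
    have hpair := contract_sound P t₀ t h₀ ht (hall _ (by simp))
    rcases List.mem_cons.1 hp with rfl | hp
    · exact hpair.1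
    rcases List.mem_cons.1 hp with rfl | hp
    · exact hpair.2
    · exact hall p (by simp [hp])
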